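/- Let A > 0 and α > 2 be real numbers. For y = (y₁, y₂) ∈ ℝ² with z = y₁ + i y₂ ≠ 0 and arg z ∈ (−π, π), and for s > 0, define v(y,s) = Re[ (1/s) · exp( −A z^α / s^α + |y|²/(4s) ) ], where z^α is the principal branch. Then v is a smooth solution of the backward heat equation ∂ₛv + Δv = 0 on {(y,s) : y₁ + i y₂ ∈ ℂ ∖ (−∞,0], s > 0}. -/

import Mathlib

open Real Set Filter

/-- The Laplacian of `f` at `x`, computed as the sum of the second partial
derivatives in the coordinate directions. -/
noncomputable def lap {n : ℕ} (f : EuclideanSpace ℝ (Fin n) → ℝ)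
    (x : EuclideanSpace ℝ (Fin n)) : ℝ :=
  ∑ i, fderiv ℝ (fun y => fderiv ℝ f y (EuclideanSpace.single i 1)) x
      (EuclideanSpace.single i 1)

/-- Escauriaza's function
`v(y,s) = Re[(1/s) exp(-A z^α / s^α + |y|²/(4s))]`, `z = y₁ + i y₂`,
with the principal branch of `z^α`. -/
noncomputable def escV (A α : ℝ) (y : EuclideanSpace ℝ (Fin 2)) (s : ℝ) : ℝ :=
  ((1 / (s : ℂ)) * Complex.exp
      (-(A : ℂ) * ((y 0 : ℂ) + (y 1 : ℂ) * Complex.I) ^ (α : ℂ) / ((s ^ α : ℝ) : ℂ)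
        + ((‖y‖ ^ 2 / (4 * s) : ℝ) : ℂ))).re

/-- The identification of the Euclidean plane with `ℂ`. -/
noncomputable def planeToComplex : EuclideanSpace ℝ (Fin 2) →L[ℝ] ℂ :=
  Complex.ofRealCLM.comp (EuclideanSpace.proj 0) +
    Complex.I • Complex.ofRealCLM.comp (EuclideanSpace.proj 1)

lemma planeToComplex_apply (y : EuclideanSpace ℝ (Fin 2)) :
    planeToComplex y = (y 0 : ℂ) + (y 1 : ℂ) * Complex.I := by
  simp [planeToComplex, mul_comm]

/-- The complex function whose real part is `escV`. -/
noncomputable def escF (A α : ℝ) (y : EuclideanSpace ℝ (Fin 2)) (s : ℝ) : ℂ :=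
  (1 / (s : ℂ)) * Complex.exp
    (-(A : ℂ) * planeToComplex y ^ (α : ℂ) / ((s ^ α : ℝ) : ℂ)
      + ((‖y‖ ^ 2 / (4 * s) : ℝ) : ℂ))

lemma escV_eq_re (A α : ℝ) (y : EuclideanSpace ℝ (Fin 2)) (s : ℝ) :
    escV A α y s = (escF A α y s).re := by
  simp only [escV, escF, planeToComplex_apply]

lemma contDiffAt_escF (A α : ℝ) {p : EuclideanSpace ℝ (Fin 2) × ℝ} {n : ℕ∞}
    (hp : planeToComplex p.1 ∈ Complex.slitPlane) (hs : 0 < p.2) :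
    ContDiffAt ℝ n (fun p : EuclideanSpace ℝ (Fin 2) × ℝ => escF A α p.1 p.2) p := by
  have hs0 : (p.2 : ℂ) ≠ 0 := by exact_mod_cast hs.ne'
  have hsnd : ContDiffAt ℝ n (fun p : EuclideanSpace ℝ (Fin 2) × ℝ => (p.2 : ℂ)) p :=
    Complex.ofRealCLM.contDiff.contDiffAt.comp p contDiffAt_snd
  have hpow : ContDiffAt ℝ n
      (fun p : EuclideanSpace ℝ (Fin 2) × ℝ => planeToComplex p.1 ^ (α : ℂ)) p := by
    have h : AnalyticAt ℂ (fun z : ℂ => z ^ (α : ℂ)) (planeToComplex p.1) :=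
      analyticAt_id.cpow analyticAt_const hp
    exact (h.contDiffAt.restrict_scalars ℝ).comp p
      (planeToComplex.contDiff.contDiffAt.comp p contDiffAt_fst)
  have hspow : ContDiffAt ℝ n
      (fun p : EuclideanSpace ℝ (Fin 2) × ℝ => ((p.2 ^ α : ℝ) : ℂ)) p :=
    Complex.ofRealCLM.contDiff.contDiffAt.comp p
      (contDiffAt_snd.rpow_const_of_ne hs.ne')
  have hnorm : ContDiffAt ℝ n
      (fun p : EuclideanSpace ℝ (Fin 2) × ℝ => ((‖p.1‖ ^ 2 / (4 * p.2) : ℝ) : ℂ)) p :=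
    Complex.ofRealCLM.contDiff.contDiffAt.comp p
      ((contDiffAt_fst.norm_sq ℝ).div (contDiffAt_const.mul contDiffAt_snd) (by positivity))
  have hspow0 : ((p.2 ^ α : ℝ) : ℂ) ≠ 0 := by
    exact_mod_cast (Real.rpow_pos_of_pos hs α).ne'
  simp only [escF, div_eq_mul_inv (_ : ℂ)]
  exact (contDiffAt_const.mul (hsnd.inv hs0)).mul
    (((contDiffAt_const.mul hpow).mul (hspow.inv hspow0)).add hnorm).cexp

lemma hasFDerivAt_planeToComplex_cpow {y : EuclideanSpace ℝ (Fin 2)}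
    (hy : planeToComplex y ∈ Complex.slitPlane) (c : ℂ) :
    HasFDerivAt (fun y => planeToComplex y ^ c)
      ((c * planeToComplex y ^ (c - 1)) • planeToComplex) y := by
  have h : HasDerivAt (fun z : ℂ => z ^ c) (c * planeToComplex y ^ (c - 1))
      (planeToComplex y) := by
    simpa using (hasDerivAt_id (planeToComplex y)).cpow_const hy
  have h' := (h.hasFDerivAt.restrictScalars ℝ).comp y planeToComplex.hasFDerivAt
  refine h'.congr_fderiv ?_
  ext v
  simp [mul_comm]

/-- The logarithmic derivative of `escF` in the direction `v`. -/
noncomputable def escLogDeriv (A α s : ℝ) (v y : EuclideanSpace ℝ (Fin 2)) : ℂ :=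
  -(A : ℂ) * (α * planeToComplex y ^ ((α : ℂ) - 1)) / ((s ^ α : ℝ) : ℂ) * planeToComplex v
    + ((inner ℝ v y / (2 * s) : ℝ) : ℂ)

lemma hasFDerivAt_escF (A α s : ℝ) {y : EuclideanSpace ℝ (Fin 2)}
    (hy : planeToComplex y ∈ Complex.slitPlane) :
    ∃ D : EuclideanSpace ℝ (Fin 2) →L[ℝ] ℂ,
      HasFDerivAt (fun y => escF A α y s) D y ∧
        ∀ v, D v = escF A α y s * escLogDeriv A α s v y := by
  have h1 := ((hasFDerivAt_planeToComplex_cpow hy α).const_mul (-(A : ℂ))).mul_const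
    ((((s ^ α : ℝ) : ℂ))⁻¹)
  have h2 := Complex.ofRealCLM.hasFDerivAt.comp y
    ((hasStrictFDerivAt_norm_sq y).hasFDerivAt.mul_const ((4 * s)⁻¹))
  refine ⟨_, (h1.add h2).cexp.const_mul (1 / (s : ℂ)), fun v => ?_⟩
  simp only [escF, escLogDeriv, div_eq_mul_inv]
  simp [real_inner_comm]
  ring

lemma fderiv_escV (A α s : ℝ) {y : EuclideanSpace ℝ (Fin 2)}
    (hy : planeToComplex y ∈ Complex.slitPlane) (v : EuclideanSpace ℝ (Fin 2)) :
    fderiv ℝ (fun y => escV A α y s) y v = (escF A α y s * escLogDeriv A α s v y).re := by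
  obtain ⟨D, hD, hv⟩ := hasFDerivAt_escF A α s hy
  have h := Complex.reCLM.hasFDerivAt.comp y hD
  simp only [escV_eq_re]
  rw [← hv v]
  exact congrArg (· v) h.fderiv

lemma fderiv_fderiv_escV (A α s : ℝ) {y : EuclideanSpace ℝ (Fin 2)}
    (hy : planeToComplex y ∈ Complex.slitPlane) (v : EuclideanSpace ℝ (Fin 2)) :
    fderiv ℝ (fun y => fderiv ℝ (fun y => escV A α y s) y v) y v =
      (escF A α y s * (escLogDeriv A α s v y ^ 2
        - A * (α * ((α - 1) * planeToComplex y ^ ((α : ℂ) - 1 - 1))) / ((s ^ α : ℝ) : ℂ)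
          * planeToComplex v ^ 2
        + ((inner ℝ v v / (2 * s) : ℝ) : ℂ))).re := by
  have hev : (fun y => fderiv ℝ (fun y => escV A α y s) y v) =ᶠ[nhds y]
      fun y => (escF A α y s * escLogDeriv A α s v y).re := by
    filter_upwards [planeToComplex.continuous.continuousAt.preimage_mem_nhds
      (Complex.isOpen_slitPlane.mem_nhds hy)] with x hx
    exact fderiv_escV A α s hx v
  obtain ⟨D, hD, hv⟩ := hasFDerivAt_escF A α s hy
  have h1 := ((((hasFDerivAt_planeToComplex_cpow hy ((α : ℂ) - 1)).const_mul
    (α : ℂ)).const_mul (-(A : ℂ))).mul_const ((((s ^ α : ℝ) : ℂ))⁻¹)).mul_const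
      (planeToComplex v)
  have h2 := Complex.ofRealCLM.hasFDerivAt.comp y
    ((innerSL ℝ v).hasFDerivAt.mul_const ((2 * s)⁻¹))
  have h := Complex.reCLM.hasFDerivAt.comp y (hD.mul (h1.add h2))
  rw [hev.fderiv_eq]
  refine (congrArg (· v) h.fderiv).trans ?_
  simp only [ContinuousLinearMap.comp_apply, Complex.reCLM_apply]
  congr 1
  simp [hv, escLogDeriv, div_eq_mul_inv]
  ring

lemma hasDerivAt_escF (A α : ℝ) (y : EuclideanSpace ℝ (Fin 2)) {s : ℝ} (hs : 0 < s) :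
    HasDerivAt (escF A α y)
      (escF A α y s * (-1 / s + α * A * planeToComplex y ^ (α : ℂ) / ((s ^ α : ℝ) : ℂ) / s
        - ((‖y‖ ^ 2 / (4 * s ^ 2) : ℝ) : ℂ))) s := by
  have hs0 : (s : ℂ) ≠ 0 := by exact_mod_cast hs.ne'
  have hp : 0 < s ^ α := Real.rpow_pos_of_pos hs α
  have hp0 : ((s ^ α : ℝ) : ℂ) ≠ 0 := by exact_mod_cast hp.ne'
  have h1 := (hasDerivAt_const s (1 : ℂ)).div (hasDerivAt_id s).ofReal_comp hs0
  have h2 := (hasDerivAt_const s (-(A : ℂ) * planeToComplex y ^ (α : ℂ))).div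
    (Real.hasDerivAt_rpow_const (p := α) (Or.inl hs.ne')).ofReal_comp hp0
  have h3 := ((hasDerivAt_const s (‖y‖ ^ 2)).div ((hasDerivAt_id s).const_mul 4)
    (by simpa using hs.ne')).ofReal_comp
  refine (h1.mul (h2.add h3).cexp).congr_deriv ?_
  simp only [escF, Real.rpow_sub_one hs.ne', Pi.add_apply, Pi.div_apply, id]
  push_cast
  field_simp
  ring

/-- `v(y,s) = Re[(1/s) exp(-A z^α/s^α + |y|²/(4s))]` is a smooth solution of the
backward heat equation `∂ₛv + Δv = 0` on `{(y,s) : y₁ + i y₂ ∈ ℂ ∖ (-∞,0], s > 0}`. -/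
theorem escV_solves_backward_heat (A α : ℝ) (hA : 0 < A) (hα : 2 < α) :
    ContDiffOn ℝ (⊤ : ℕ∞) (fun p : EuclideanSpace ℝ (Fin 2) × ℝ => escV A α p.1 p.2)
      {p : EuclideanSpace ℝ (Fin 2) × ℝ |
        ((p.1 0 : ℂ) + (p.1 1 : ℂ) * Complex.I) ∈ Complex.slitPlane ∧ 0 < p.2} ∧
    ∀ (y : EuclideanSpace ℝ (Fin 2)) (s : ℝ),
      ((y 0 : ℂ) + (y 1 : ℂ) * Complex.I) ∈ Complex.slitPlane → 0 < s →
      deriv (escV A α y) s + lap (fun z => escV A α z s) y = 0 := by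
  simp only [← planeToComplex_apply]
  refine ⟨fun p hp => ?_, fun y s hy hs => ?_⟩
  · simp only [escV_eq_re]
    exact (Complex.reCLM.contDiff.contDiffAt.comp p
      (contDiffAt_escF A α hp.1 hp.2)).contDiffWithinAt
  · have ht : deriv (escV A α y) s = _ :=
      (show HasDerivAt (escV A α y) _ s by
        rw [funext (escV_eq_re A α y)]
        exact Complex.reCLM.hasFDerivAt.comp_hasDerivAt s (hasDerivAt_escF A α y hs)).deriv
    have hs0 : (s : ℂ) ≠ 0 := by exact_mod_cast hs.ne'
    have hp0 : ((s ^ α : ℝ) : ℂ) ≠ 0 := by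
      exact_mod_cast (Real.rpow_pos_of_pos hs α).ne'
    have hy0 : planeToComplex y ≠ 0 := Complex.slitPlane_ne_zero hy
    have hpow : planeToComplex y ^ (α : ℂ) =
        planeToComplex y ^ ((α : ℂ) - 1) * ((y 0 : ℂ) + (y 1 : ℂ) * Complex.I) := by
      rw [← planeToComplex_apply, Complex.cpow_sub _ _ hy0, Complex.cpow_one,
        div_mul_cancel₀ _ hy0]
    have hz0 : planeToComplex (EuclideanSpace.single 0 1) = 1 := by
      simp [planeToComplex_apply]
    have hz1 : planeToComplex (EuclideanSpace.single 1 1) = Complex.I := by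
      simp [planeToComplex_apply]
    rw [ht, lap, Fin.sum_univ_two, fderiv_fderiv_escV A α s hy, fderiv_fderiv_escV A α s hy,
      Complex.reCLM_apply, ← Complex.add_re, ← Complex.add_re, ← mul_add, ← mul_add]
    convert Complex.zero_re
    refine mul_eq_zero_of_right _ ?_
    simp only [escLogDeriv, hz0, hz1, hpow, EuclideanSpace.real_norm_sq_eq, Fin.sum_univ_two,
      EuclideanSpace.inner_single_left]
    simp
    field_simp
    ring_nf
    simp only [Complex.I_sq]
    ring
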